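/- arXiv:2110.13893 — 3 statements merged into one kernel-verified Lean document; each statement's English description precedes it below -/
import Mathlib

section
/- Let d ≥ 5, n ≥ 4 and a, b > 1, and let C be an (a,b) separated DOT clustering of an n-element configuration in Z^d with a ≥ e^{max{100b, 10d²}}. Then for every cluster index i and every x ∈ C^i, esc_{C^i}(x) > 0 implies esc_{π(C)}(x) > 0. -/
open MeasureTheory

namespace HATFormal

/-- Points of the lattice `ℤ^d`. -/
abbrev Pt (d : ℕ) := Fin d → ℤ

/-- The `2d` unit steps of the simple random walk on `ℤ^d`. -/
def Dir (d : ℕ) : Set (Pt d) :=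
  {s | ∃ i : Fin d, s = Pi.single i 1 ∨ s = Pi.single i (-1)}

/-- The position, after `t` steps, of the walk started at `x` with steps `s`. -/
def wpos (d : ℕ) (x : Pt d) {T : ℕ} (s : Fin T → Pt d) (t : ℕ) : Pt d :=
  x + ∑ i ∈ Finset.univ.filter (fun i : Fin T => (i : ℕ) < t), s i

/-- The probability of an event `P` of the first `T` steps of simple random walk on `ℤ^d`. -/
noncomputable def prob (d T : ℕ) (P : (Fin T → Pt d) → Prop) : ℝ :=
  (Nat.card {s : Fin T → Pt d // (∀ i, s i ∈ Dir d) ∧ P s} : ℝ) / ((2 * d : ℕ) : ℝ) ^ T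

open Classical in
/-- `esc d A x = P_x(τ_A = ∞)` if `x ∈ A`, and `0` otherwise. -/
noncomputable def esc (d : ℕ) (A : Set (Pt d)) (x : Pt d) : ℝ :=
  if x ∈ A then ⨅ T : ℕ, prob d T (fun s => ∀ t, 1 ≤ t → t ≤ T → wpos d x s t ∉ A) else 0

/-- The capacity of `A`. -/
noncomputable def capa (d : ℕ) (A : Set (Pt d)) : ℝ := ∑' x : A, esc d A (x : Pt d)

/-- The harmonic measure `H_A(x) = esc_A(x) / cap_A`. -/
noncomputable def harm (d : ℕ) (A : Set (Pt d)) (x : Pt d) : ℝ := esc d A x / capa d A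

/-- `P_x(τ_W < ∞)`. -/
noncomputable def retProb (d : ℕ) (W : Set (Pt d)) (x : Pt d) : ℝ :=
  ∑' t : ℕ, prob d t (fun s => 1 ≤ t ∧ wpos d x s t ∈ W ∧
    ∀ u, 1 ≤ u → u < t → wpos d x s u ∉ W)

/-- `P_x(τ_W < ∞ and S_{τ_W − 1} = y)`. -/
noncomputable def hitFrom (d : ℕ) (W : Set (Pt d)) (x y : Pt d) : ℝ :=
  ∑' t : ℕ, prob d t (fun s => 1 ≤ t ∧ wpos d x s t ∈ W ∧ wpos d x s (t - 1) = y ∧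
    ∀ u, 1 ≤ u → u < t → wpos d x s u ∉ W)

/-- `P_x(τ_W < ∞ and S_{τ_W} ∈ T)`. -/
noncomputable def firstHitIn (d : ℕ) (W T : Set (Pt d)) (x : Pt d) : ℝ :=
  ∑' t : ℕ, prob d t (fun s => 1 ≤ t ∧ wpos d x s t ∈ W ∧ wpos d x s t ∈ T ∧
    ∀ u, 1 ≤ u → u < t → wpos d x s u ∉ W)

/-- `P_x(S_{τ_W − 1} = y ∣ τ_W < ∞)`. -/
noncomputable def transP (d : ℕ) (W : Set (Pt d)) (x y : Pt d) : ℝ :=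
  hitFrom d W x y / retProb d W x

/-- The Green's function of simple random walk on `ℤ^d`. -/
noncomputable def green (d : ℕ) (x : Pt d) : ℝ :=
  ∑' t : ℕ, prob d t (fun s => wpos d x s t = 0)

/-- Configurations: finite subsets of `ℤ^d`. -/
abbrev Conf (d : ℕ) := Finset (Pt d)

/-- `p_U(x, y)`, the probability that HAT activates at `x` and transports to `y`. -/
noncomputable def pHAT (d : ℕ) (U : Conf d) (x y : Pt d) : ℝ :=
  harm d (↑U) x * transP d ((↑U : Set (Pt d)) \ {x}) x y

open Classical in
/-- The transition probabilities of HAT. -/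
noncomputable def hatProb (d : ℕ) (U V : Conf d) : ℝ :=
  if V = U then ∑' z : Pt d, pHAT d U z z
  else ∑' x : Pt d, ∑' y : Pt d,
    if x ∈ U ∧ x ≠ y ∧ V = insert y (U.erase x) then pHAT d U x y else 0

instance (d : ℕ) : MeasurableSpace (Conf d) := ⊤

/-- `μ` is the law of HAT started from `U`. -/
def IsHATLaw (d : ℕ) (U : Conf d) (μ : Measure (ℕ → Conf d)) : Prop :=
  IsProbabilityMeasure μ ∧
  ∀ (t : ℕ) (u : ℕ → Conf d),
    μ {ω | ∀ s ≤ t, ω s = u s} =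
      (if u 0 = U then 1 else 0) *
        ∏ s ∈ Finset.range t, ENNReal.ofReal (hatProb d (u s) (u (s + 1)))

/-- A signed permutation plus translation of `ℤ^d`. -/
def SymImage (d : ℕ) (σ : Equiv.Perm (Fin d)) (ε : Fin d → ℤ) (v : Pt d) (x : Pt d) : Pt d :=
  fun i => v i + ε i * x (σ i)

/-- `SymEq d U V` holds when `V = gU` for a symmetry `g` of `ℤ^d`. -/
def SymEq (d : ℕ) (U V : Conf d) : Prop :=
  ∃ (σ : Equiv.Perm (Fin d)) (ε : Fin d → ℤ) (v : Pt d),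
    (∀ i, ε i = 1 ∨ ε i = -1) ∧ V = U.image (SymImage d σ ε v)

/-- Euclidean distance on `ℤ^d`. -/
noncomputable def dist0 (d : ℕ) (x y : Pt d) : ℝ :=
  Real.sqrt (∑ i, ((x i : ℝ) - (y i : ℝ)) ^ 2)

/-- Euclidean distance between finite subsets of `ℤ^d`. -/
noncomputable def setDist (d : ℕ) (A B : Finset (Pt d)) : ℝ :=
  sInf {r : ℝ | ∃ x ∈ A, ∃ y ∈ B, r = dist0 d x y}

/-- Euclidean diameter of a finite subset of `ℤ^d`. -/
noncomputable def diam0 (d : ℕ) (A : Finset (Pt d)) : ℝ :=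
  sSup {r : ℝ | ∃ x ∈ A, ∃ y ∈ A, r = dist0 d x y}

/-- Lattice (nearest-neighbor) adjacency in `ℤ^d`. -/
def latAdj (d : ℕ) (x y : Pt d) : Prop := (∑ i, (x i - y i).natAbs) = 1

/-- Exterior lattice boundary of a set. -/
def bdry (d : ℕ) (A : Set (Pt d)) : Set (Pt d) := {z | z ∉ A ∧ ∃ w ∈ A, latAdj d z w}

/-- Non-isolated configurations: some exposed element has a lattice neighbor in the set. -/
def NonIso (d : ℕ) (U : Conf d) : Prop :=
  ∃ x ∈ U, 0 < esc d (↑U) x ∧ ∃ y ∈ U, latAdj d x y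

/-- `C` is a clustering (ordered partition into nonempty clusters) of `U`. -/
def IsClusteringOf (d : ℕ) {k : ℕ} (C : Fin k → Finset (Pt d)) (U : Finset (Pt d)) : Prop :=
  (∀ i, (C i).Nonempty) ∧ (∀ i j, i ≠ j → Disjoint (C i) (C j)) ∧
    Finset.univ.biUnion C = U

/-- `C^{≠ i}`, the union of the clusters other than `i`. -/
def others (d : ℕ) {k : ℕ} (C : Fin k → Finset (Pt d)) (i : Fin k) : Finset (Pt d) :=
  Finset.univ.biUnion fun j => if j = i then ∅ else C j

/-- The separation of a clustering. -/
noncomputable def sep (d : ℕ) {k : ℕ} (C : Fin k → Finset (Pt d)) : ℝ :=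
  ⨅ i, setDist d (C i) (others d C i)

/-- `(a, b)` separated dimer-or-trimer (DOT) clusterings. -/
def IsDOT (d : ℕ) {k : ℕ} (C : Fin k → Finset (Pt d)) (a b : ℝ) : Prop :=
  (∀ i, (C i).card = 2 ∨ (C i).card = 3) ∧ a ≤ sep d C ∧
    ∀ i, diam0 d (C i) ≤ b * Real.log (setDist d (C i) (others d C i))

/-- Clusterings with an unspecified number of clusters. -/
abbrev ClusteringS (d : ℕ) := Σ k : ℕ, Fin k → Finset (Pt d)

/-- `π(C)`, the union of the clusters of `C`. -/
def confOf (d : ℕ) (C : ClusteringS d) : Conf d := Finset.univ.biUnion C.2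

/-- `C ∈ 𝒞(U, a, b)`. -/
def InC (d : ℕ) (U : Conf d) (a b : ℝ) (C : ClusteringS d) : Prop :=
  IsClusteringOf d C.2 U ∧ IsDOT d C.2 a b

/-- `U ∈ 𝒰_{d,n}(a, b)`. -/
def InU (d n : ℕ) (a b : ℝ) (U : Conf d) : Prop :=
  U.card = n ∧ ∃ C : ClusteringS d, InC d U a b C

/-- `C` is a clustering of an `n`-element configuration. -/
def IsClusteringConf (d n : ℕ) (C : ClusteringS d) : Prop :=
  (∀ i, (C.2 i).Nonempty) ∧ (∀ i j, i ≠ j → Disjoint (C.2 i) (C.2 j)) ∧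
    (confOf d C).card = n

open Classical in
/-- One step of the natural clustering. -/
noncomputable def clustStep (d : ℕ) (Ut Ut1 : Conf d) (C : ClusteringS d) : ClusteringS d :=
  if Ut1 = Ut then C
  else if h : ∃ p : Pt d × Pt d × Fin C.1,
      Ut \ Ut1 = {p.1} ∧ Ut1 \ Ut = {p.2.1} ∧ p.1 ∈ C.2 p.2.2 then
    ⟨C.1, Function.update C.2 h.choose.2.2
      (insert h.choose.2.1 ((C.2 h.choose.2.2).erase h.choose.1))⟩
  else ⟨1, fun _ => Ut1⟩

/-- The natural clustering of the trajectory `ω` with initial clustering `C0`. -/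
noncomputable def natClust (d : ℕ) (ω : ℕ → Conf d) (C0 : ClusteringS d) : ℕ → ClusteringS d
  | 0 => C0
  | t + 1 => clustStep d (ω t) (ω (t + 1)) (natClust d ω C0 t)

/-- `a_s = s^{1/2 − n^{−100}} + 100 n`. -/
noncomputable def aSep (n s : ℕ) : ℝ :=
  (s : ℝ) ^ ((1 : ℝ) / 2 - (n : ℝ) ^ (-(100 : ℝ))) + 100 * n

/-- `C^{i, x, y}`: remove `x` from cluster `i` of `C` and add `y` to that cluster. -/
def updC (d : ℕ) (C : ClusteringS d) (i : Fin C.1) (x y : Pt d) : ClusteringS d :=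
  ⟨C.1, Function.update C.2 i (insert y ((C.2 i).erase x))⟩

open Classical in
/-- The transition probabilities of the lifting of HAT to clusterings. -/
noncomputable def liftProb (d : ℕ) (E0 E1 : ClusteringS d) : ℝ :=
  ∑' x : Pt d, ∑' y : Pt d,
    if ∃ i : Fin E0.1, x ∈ E0.2 i ∧ E1 = updC d E0 i x y
    then pHAT d (confOf d E0) x y else 0

/-- The capacity of a clustering: the sum of the capacities of its clusters. -/
noncomputable def capS (d : ℕ) (C : ClusteringS d) : ℝ := ∑ i, capa d (↑(C.2 i))

/-- `H_C(i, x) = esc_{C^i}(x) / cap_C`. -/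
noncomputable def harmS (d : ℕ) (C : ClusteringS d) (i : Fin C.1) (x : Pt d) : ℝ :=
  esc d (↑(C.2 i)) x / capS d C

/-- `q_C(i, x, y)`. -/
noncomputable def qIHAT (d : ℕ) (C : ClusteringS d) (i : Fin C.1) (x y : Pt d) : ℝ :=
  harmS d C i x * transP d ((↑(C.2 i) : Set (Pt d)) \ {x}) x y

open Classical in
/-- The transition probabilities of intracluster HAT (IHAT). -/
noncomputable def ihatProb (d : ℕ) (D E : ClusteringS d) : ℝ :=
  ∑' x : Pt d, ∑' y : Pt d, ∑ i : Fin D.1,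
    if x ∈ D.2 i ∧ E = updC d D i x y then qIHAT d D i x y else 0

instance (d : ℕ) : MeasurableSpace (ClusteringS d) := ⊤

open Classical in
/-- `μ` is the law of the lifted HAT chain started from `E0`. -/
def IsLiftLaw (d : ℕ) (E0 : ClusteringS d) (μ : Measure (ℕ → ClusteringS d)) : Prop :=
  IsProbabilityMeasure μ ∧
  ∀ (t : ℕ) (u : ℕ → ClusteringS d),
    μ {ω | ∀ s ≤ t, ω s = u s} =
      (if u 0 = E0 then 1 else 0) *
        ∏ s ∈ Finset.range t, ENNReal.ofReal (liftProb d (u s) (u (s + 1)))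

open Classical in
/-- `μ` is the law of intracluster HAT started from `D0`. -/
def IsIHATLaw (d : ℕ) (D0 : ClusteringS d) (μ : Measure (ℕ → ClusteringS d)) : Prop :=
  IsProbabilityMeasure μ ∧
  ∀ (t : ℕ) (u : ℕ → ClusteringS d),
    μ {ω | ∀ s ≤ t, ω s = u s} =
      (if u 0 = D0 then 1 else 0) *
        ∏ s ∈ Finset.range t, ENNReal.ofReal (ihatProb d (u s) (u (s + 1)))

/-- `Pairs(E0, E1)`. -/
def Pairs (d : ℕ) (E0 E1 : ClusteringS d) : Set (Pt d × Pt d) :=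
  {p | 0 < pHAT d (confOf d E0) p.1 p.2 ∧
    ∃ i : Fin E0.1, p.1 ∈ E0.2 i ∧ E1 = updC d E0 i p.1 p.2}

/-- `Triples(E0, E1)`. -/
def Triples (d : ℕ) (E0 E1 : ClusteringS d) : Set (Fin E0.1 × Pt d × Pt d) :=
  {q | 0 < qIHAT d E0 q.1 q.2.1 q.2.2 ∧ E1 = updC d E0 q.1 q.2.1 q.2.2}

/-- The first standard basis vector of `ℤ^d`. -/
def e1v (d : ℕ) : Pt d := fun i => if (i : ℕ) = 0 then 1 else 0

/-- Reference dimers and trimers. -/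
def Ref (d : ℕ) : Set (Finset (Pt d)) :=
  {A | ∃ x : Pt d, A = {x, x + e1v d} ∨ A = {x, x + e1v d, x + e1v d + e1v d}}

/-- *-adjacency in `ℤ^d`: distinct points differing by at most one in each coordinate. -/
def starAdj (d : ℕ) (x y : Pt d) : Prop := x ≠ y ∧ ∀ i, (x i - y i).natAbs ≤ 1

/-- The *-visible boundary of `A`. -/
def visBdry (d : ℕ) (A : Finset (Pt d)) : Set (Pt d) :=
  {x | (∃ y ∈ A, starAdj d x y) ∧
    ∃ γ : ℕ → Pt d, γ 0 = x ∧ (∀ t, latAdj d (γ t) (γ (t + 1))) ∧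
      (∀ t, γ t ∉ A) ∧ ∀ r : ℝ, ∃ t, r < dist0 d (γ t) 0}

/-- `A` is connected in the nearest-neighbor graph of `ℤ^d`. -/
def LatConnected (d : ℕ) (A : Finset (Pt d)) : Prop :=
  ∀ x ∈ A, ∀ y ∈ A, ∃ (L : ℕ) (γ : ℕ → Pt d), γ 0 = x ∧ γ L = y ∧
    (∀ t < L, latAdj d (γ t) (γ (t + 1))) ∧ ∀ t ≤ L, γ t ∈ A

/-- Strict lexicographic order on `ℤ^d`. -/
def lexLt (d : ℕ) (x y : Pt d) : Prop :=
  ∃ i : Fin d, (∀ j, j < i → x j = y j) ∧ x i < y i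

/-- `x` is the lex (least) element of `A`. -/
def IsLex (d : ℕ) (A : Finset (Pt d)) (x : Pt d) : Prop :=
  x ∈ A ∧ ∀ y ∈ A, y ≠ x → lexLt d x y

/-- The unit step in direction `k.1` with sign given by `k.2`. -/
def stp (d : ℕ) (k : Fin d × Bool) : Pt d := Pi.single k.1 (if k.2 then 1 else -1)

theorem stp_mem (d : ℕ) (k : Fin d × Bool) : stp d k ∈ Dir d := by
  refine ⟨k.1, ?_⟩
  unfold stp
  rcases k with ⟨i, b⟩
  cases b <;> simp

theorem stp_inj (d : ℕ) : Function.Injective (stp d) := by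
  rintro ⟨i, b⟩ ⟨j, c⟩ h
  have h1 := congrFun h i
  by_cases hij : i = j
  · subst hij
    cases b <;> cases c <;> simp [stp] at h1 ⊢
  · exfalso
    simp only [stp, Pi.single_eq_same, Pi.single_eq_of_ne hij] at h1
    cases b <;> simp at h1

theorem dir_finite (d : ℕ) : (Dir d).Finite := by
  apply (Set.finite_range (stp d)).subset
  rintro s ⟨i, h | h⟩
  · exact ⟨(i, true), by simp [stp, h]⟩
  · exact ⟨(i, false), by simp [stp, h]⟩

theorem walks_finite (d T : ℕ) (P : (Fin T → Pt d) → Prop) :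
    Finite {s : Fin T → Pt d // (∀ i, s i ∈ Dir d) ∧ P s} := by
  have h : (Set.pi Set.univ (fun _ : Fin T => Dir d)).Finite :=
    Set.Finite.pi (fun _ => dir_finite d)
  exact (h.subset (fun s hs => by intro i _; exact hs.1 i) :
    {s : Fin T → Pt d | (∀ i, s i ∈ Dir d) ∧ P s}.Finite)

theorem wpos_cons (d : ℕ) (x e : Pt d) {T : ℕ} (s : Fin T → Pt d) (t : ℕ) :
    wpos d x (Fin.cons e s : Fin (T + 1) → Pt d) (t + 1) = wpos d (x + e) s t := by
  unfold wpos
  simp only [Finset.sum_filter]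
  rw [Fin.sum_univ_succ]
  simp [add_assoc]

/-- Probability of avoiding `A` at times `1, …, T`. -/
noncomputable def avoidP (d : ℕ) (A : Set (Pt d)) (T : ℕ) (x : Pt d) : ℝ :=
  prob d T (fun s => ∀ t, 1 ≤ t → t ≤ T → wpos d x s t ∉ A)

theorem avoidP_zero (d : ℕ) (A : Set (Pt d)) (x : Pt d) : avoidP d A 0 x = 1 := by
  unfold avoidP prob
  have : Nat.card {s : Fin 0 → Pt d // (∀ i, s i ∈ Dir d) ∧
      ∀ t, 1 ≤ t → t ≤ 0 → wpos d x s t ∉ A} = 1 := by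
    rw [Nat.card_eq_one_iff_unique]
    refine ⟨⟨fun a b => Subtype.ext (Subsingleton.elim _ _)⟩, ⟨⟨Fin.elim0, ?_, ?_⟩⟩⟩
    · intro i; exact i.elim0
    · intro t h1 h2; omega
  rw [this]; simp

theorem avoidP_nonneg (d : ℕ) (A : Set (Pt d)) (T : ℕ) (x : Pt d) : 0 ≤ avoidP d A T x := by
  unfold avoidP prob; positivity

open Classical in
theorem avoidP_succ (d : ℕ) (A : Set (Pt d)) (T : ℕ) (x : Pt d) :
    (∑ k : Fin d × Bool, if x + stp d k ∈ A then 0 else avoidP d A T (x + stp d k)) / (2 * d : ℝ)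
      ≤ avoidP d A (T + 1) x := by
  let X : Fin d × Bool → Type := fun k => {s : Fin T → Pt d // (∀ i, s i ∈ Dir d) ∧
    (x + stp d k ∉ A ∧ ∀ t, 1 ≤ t → t ≤ T → wpos d (x + stp d k) s t ∉ A)}
  let Y : Type := {s : Fin (T + 1) → Pt d // (∀ i, s i ∈ Dir d) ∧
    ∀ t, 1 ≤ t → t ≤ T + 1 → wpos d x s t ∉ A}
  haveI : Finite Y := walks_finite d (T + 1) _
  haveI : ∀ k, Finite (X k) := fun k => walks_finite d T _
  let F : (Σ k, X k) → Y := fun p => ⟨Fin.cons (stp d p.1) p.2.1, by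
    constructor
    · intro i
      refine Fin.cases ?_ (fun j => ?_) i
      · simpa using stp_mem d p.1
      · simpa using p.2.2.1 j
    · intro t h1 h2
      obtain ⟨t, rfl⟩ : ∃ u, t = u + 1 := ⟨t - 1, by omega⟩
      rw [wpos_cons]
      rcases Nat.eq_zero_or_pos t with rfl | ht
      · have := p.2.2.2.1
        simpa [wpos] using this
      · exact p.2.2.2.2 t ht (by omega)⟩
  have hF : Function.Injective F := by
    rintro ⟨k, s, hs⟩ ⟨l, r, hr⟩ h
    have h' := congrArg Subtype.val h
    simp only [F] at h'
    have h2 := Fin.cons_injective2 h'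
    obtain ⟨h3, h4⟩ := h2
    have := stp_inj d h3
    subst this
    subst h4
    rfl
  have hcard := Nat.card_le_card_of_injective F hF
  rw [Nat.card_sigma] at hcard
  have hX : ∀ k, (if x + stp d k ∈ A then 0 else avoidP d A T (x + stp d k)) =
      (Nat.card (X k) : ℝ) / ((2 * d : ℕ) : ℝ) ^ T := by
    intro k
    split_ifs with h
    · have : IsEmpty (X k) := ⟨fun s => s.2.2.1 h⟩
      simp
    · unfold avoidP prob
      simp only [X, h, not_false_eq_true, true_and]
  rw [Finset.sum_congr rfl (fun k _ => hX k), ← Finset.sum_div]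
  have hY : avoidP d A (T + 1) x = (Nat.card Y : ℝ) / ((2 * d : ℕ) : ℝ) ^ (T + 1) := rfl
  rw [hY, pow_succ, div_div]
  push_cast
  have : (∑ k, (Nat.card (X k) : ℝ)) ≤ (Nat.card Y : ℝ) := by exact_mod_cast hcard
  exact div_le_div_of_nonneg_right this (by positivity)

/-- Squared Euclidean norm. -/
def nsq (d : ℕ) (x : Pt d) : ℤ := ∑ i, x i ^ 2

theorem nsq_nonneg (d : ℕ) (x : Pt d) : 0 ≤ nsq d x := Finset.sum_nonneg fun i _ => sq_nonneg _

/-- A superharmonic function. -/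
noncomputable def sh (d : ℕ) (x : Pt d) : ℝ := 1 / ((nsq d x : ℝ) + 4)

theorem nsq_stp (d : ℕ) (x : Pt d) (i : Fin d) (b : Bool) :
    nsq d (x + stp d (i, b)) = nsq d x + 1 + 2 * (if b then 1 else -1) * x i := by
  unfold nsq
  have : ∀ j, (x + stp d (i, b)) j ^ 2 = x j ^ 2 +
      (if j = i then 1 + 2 * (if b then 1 else -1) * x i else 0) := by
    intro j
    by_cases h : j = i
    · subst h; cases b <;> simp [stp] <;> ring
    · simp [stp, h]
  rw [Finset.sum_congr rfl (fun j _ => this j), Finset.sum_add_distrib]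
  simp; ring

theorem sh_super (d : ℕ) (hd : 5 ≤ d) (x : Pt d) :
    ∑ k : Fin d × Bool, sh d (x + stp d k) ≤ 2 * d * sh d x := by
  rw [Fintype.sum_prod_type]
  set R : ℝ := (nsq d x : ℝ) + 5 with hR
  have hn0 : (0 : ℝ) ≤ nsq d x := by exact_mod_cast nsq_nonneg d x
  have hR5 : 5 ≤ R := by linarith
  have hxi : ∀ i, (x i : ℝ) ^ 2 ≤ R - 5 := by
    intro i
    have : x i ^ 2 ≤ nsq d x :=
      Finset.single_le_sum (f := fun i => x i ^ 2) (fun i _ => sq_nonneg _) (Finset.mem_univ i)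
    have : ((x i ^ 2 : ℤ) : ℝ) ≤ nsq d x := by exact_mod_cast this
    push_cast at this; linarith
  have hterm : ∀ i, ∑ b : Bool, sh d (x + stp d (i, b)) ≤
      2 / R + 8 * (x i : ℝ) ^ 2 / (R * (R * (R - 4))) := by
    intro i
    simp only [Fintype.sum_bool, sh, nsq_stp, Int.cast_add, Int.cast_mul, Int.cast_one, Int.cast_ofNat]
    have h := hxi i
    have habs := abs_le.mp (abs_le_of_sq_le_sq (a := 2 * (x i : ℝ)) (b := R - 1)
      (by nlinarith) (by linarith))
    have e1 : (nsq d x : ℝ) + 1 + 2 * 1 * x i + 4 = R + 2 * x i := by rw [hR]; ring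
    have e2 : (nsq d x : ℝ) + 1 + 2 * -1 * x i + 4 = R - 2 * x i := by rw [hR]; ring
    simp only [if_true, Bool.false_eq_true, if_false, Int.cast_one, Int.cast_neg]
    rw [e1, e2]
    have p1 : 0 < R + 2 * x i := by linarith
    have p2 : 0 < R - 2 * x i := by linarith
    have hprod : R * (R - 4) ≤ (R + 2 * x i) * (R - 2 * x i) := by nlinarith
    have p3 : 0 < R * (R - 4) := by apply mul_pos <;> linarith
    have eq : 1 / (R + 2 * x i) + 1 / (R - 2 * x i) =
        2 / R + 8 * (x i : ℝ) ^ 2 / (R * ((R + 2 * x i) * (R - 2 * x i))) := by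
      have : R ≠ 0 := by linarith
      field_simp
      ring
    rw [eq]
    have : 0 < R := by linarith
    gcongr
  refine (Finset.sum_le_sum fun i _ => hterm i).trans ?_
  rw [Finset.sum_add_distrib, ← Finset.sum_div (f := fun i => 8 * (x i : ℝ) ^ 2), ← Finset.mul_sum]
  have hs : ∑ i, (x i : ℝ) ^ 2 = R - 5 := by
    rw [hR]; unfold nsq; push_cast; ring
  rw [hs]
  have hsh : sh d x = 1 / (R - 1) := by unfold sh; rw [hR]; ring_nf
  rw [hsh]
  simp only [Finset.sum_const, Finset.card_univ, Fintype.card_fin, nsmul_eq_mul]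
  have hd' : (5 : ℝ) ≤ d := by exact_mod_cast hd
  have r0 : 0 < R := by linarith
  have r1 : 0 < R - 1 := by linarith
  have r4 : 0 < R - 4 := by linarith
  have key : 8 * (R - 5) / (R * (R * (R - 4))) ≤ 2 * d / (R * (R - 1)) := by
    rw [div_le_div_iff₀ (by positivity) (by positivity)]
    have : 8 * (R - 5) * (R - 1) ≤ 2 * d * (R * (R - 4)) := by
      have : 0 ≤ R * (R - 4) := by positivity
      nlinarith
    calc _ = (8 * (R - 5) * (R - 1)) * R := by ring
      _ ≤ (2 * d * (R * (R - 4))) * R := by gcongr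
      _ = _ := by ring
  have : 2 * (d : ℝ) * (1 / (R - 1)) = d * (2 / R) + 2 * d / (R * (R - 1)) := by
    field_simp; ring
  linarith

theorem avoid_lower (d : ℕ) (hd : 5 ≤ d) (A : Set (Pt d)) (m : ℝ) (hm : 0 < m)
    (hA : ∀ u ∈ A, m ≤ sh d u) (T : ℕ) :
    ∀ y, 1 - sh d y / m ≤ avoidP d A T y := by
  classical
  have hd0 : (0 : ℝ) < 2 * d := by
    have : (5 : ℝ) ≤ d := by exact_mod_cast hd
    linarith
  have hsh0 : ∀ y, 0 ≤ sh d y := fun y => by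
    have : (0 : ℝ) ≤ nsq d y := by exact_mod_cast nsq_nonneg d y
    unfold sh; positivity
  induction T with
  | zero =>
    intro y
    rw [avoidP_zero]
    have := div_nonneg (hsh0 y) hm.le
    linarith
  | succ T ih =>
    intro y
    refine le_trans ?_ (avoidP_succ d A T y)
    rw [le_div_iff₀ hd0]
    have h1 : ∑ k : Fin d × Bool, (1 - sh d (y + stp d k) / m) ≤
        ∑ k : Fin d × Bool, if y + stp d k ∈ A then 0 else avoidP d A T (y + stp d k) := by
      apply Finset.sum_le_sum
      intro k _
      split_ifs with h
      · have := (one_le_div hm).mpr (hA _ h)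
        linarith
      · exact ih _
    refine le_trans ?_ h1
    rw [Finset.sum_sub_distrib, ← Finset.sum_div]
    simp only [Finset.sum_const, Finset.card_univ, Fintype.card_prod, Fintype.card_fin,
      Fintype.card_bool, nsmul_eq_mul, mul_one]
    push_cast
    have h2 := div_le_div_of_nonneg_right (sh_super d hd y) hm.le
    have : (1 - sh d y / m) * (2 * d) = d * 2 - 2 * d * sh d y / m := by ring
    linarith

theorem esc_pos_of_local (d : ℕ) (hd : 5 ≤ d) (U : Finset (Pt d))
    (hloc : ∀ z : Pt d, ∃ i : Fin d, z + stp d (i, true) ∉ U) (x : Pt d) (hx : x ∈ U) :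
    0 < esc d (↑U) x := by
  classical
  have hd0 : (0 : ℝ) < 2 * d := by
    have : (5 : ℝ) ≤ d := by exact_mod_cast hd
    linarith
  set M : ℤ := ∑ u ∈ U, nsq d u with hM
  have hM0 : 0 ≤ M := Finset.sum_nonneg fun u _ => nsq_nonneg d u
  have hM0' : (0 : ℝ) ≤ M := by exact_mod_cast hM0
  have main : ∀ N : ℕ, ∀ z : Pt d, M + 1 - N ≤ ∑ i, z i →
      ∃ c : ℝ, 0 < c ∧ ∀ T, c ≤ avoidP d (↑U) T z := by
    intro N
    induction N with
    | zero =>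
      intro z hz
      have h1 : ∑ i, z i ≤ nsq d z := by
        apply Finset.sum_le_sum
        intro i _
        rcases le_or_gt (z i) 0 with h | h <;> nlinarith
      have h2 : M + 1 ≤ nsq d z := by push_cast at hz; linarith
      have h2' : (M : ℝ) + 1 ≤ nsq d z := by exact_mod_cast h2
      refine ⟨1 - sh d z / (1 / ((M : ℝ) + 4)), ?_, fun T => ?_⟩
      · have : sh d z / (1 / ((M : ℝ) + 4)) < 1 := by
          rw [div_lt_one (by positivity)]
          unfold sh
          apply one_div_lt_one_div_of_lt <;> linarith
        linarith
      · apply avoid_lower d hd _ _ (by positivity)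
        intro u hu
        have h3 : nsq d u ≤ M :=
          Finset.single_le_sum (f := nsq d) (fun u _ => nsq_nonneg d u) (by simpa using hu)
        have h3' : (nsq d u : ℝ) ≤ M := by exact_mod_cast h3
        have h4 : (0 : ℝ) ≤ nsq d u := by exact_mod_cast nsq_nonneg d u
        unfold sh
        apply one_div_le_one_div_of_le <;> linarith
    | succ N ih =>
      intro z hz
      obtain ⟨i, hi⟩ := hloc z
      obtain ⟨c, hc, hcT⟩ := ih (z + stp d (i, true)) (by
        have : ∑ j, (z + stp d (i, true)) j = ∑ j, z j + 1 := by
          simp [stp, Finset.sum_add_distrib]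
        rw [this]; push_cast at hz; linarith)
      have hc1 : c ≤ 1 := by simpa [avoidP_zero] using hcT 0
      have hd1 : (1 : ℝ) ≤ 2 * d := by
        have : (5 : ℝ) ≤ d := by exact_mod_cast hd
        linarith
      refine ⟨c / (2 * d), by positivity, fun T => ?_⟩
      rcases T with _ | T
      · rw [avoidP_zero, div_le_one hd0]; linarith
      · refine le_trans ?_ (avoidP_succ d _ T z)
        gcongr
        refine le_trans ?_ (Finset.single_le_sum (fun k _ => ?_) (Finset.mem_univ (i, true)))
        · rw [if_neg (by simpa using hi)]; exact hcT T
        · split_ifs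
          · exact le_rfl
          · exact avoidP_nonneg _ _ _ _
  obtain ⟨c, hc, hcT⟩ := main (M + 1 - ∑ i, x i).toNat x (by omega)
  unfold esc
  rw [if_pos (by simpa using hx)]
  exact lt_of_lt_of_le hc (le_ciInf hcT)

/-- If `C` is an `(a,b)` separated DOT clustering of an `n`-element configuration in `ℤ^d`,
`d ≥ 5`, `n ≥ 4`, with `a ≥ e^{max{100b, 10d²}}`, then any element which can escape from
its own cluster can escape from the whole configuration `π(C)`. -/
theorem esc_pass (d n : ℕ) (hd : 5 ≤ d) (hn : 4 ≤ n) (a b : ℝ)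
    (ha1 : 1 < a) (hb : 1 < b)
    (ha : Real.exp (max (100 * b) (10 * (d : ℝ) ^ 2)) ≤ a)
    (C : ClusteringS d) (hC : IsClusteringConf d n C) (hdot : IsDOT d C.2 a b) :
    ∀ (i : Fin C.1) (x : Pt d), x ∈ C.2 i →
      0 < esc d (↑(C.2 i)) x → 0 < esc d (↑(confOf d C)) x := by
  classical
  intro i x hx _
  obtain ⟨_, _, _⟩ := hC
  obtain ⟨hcard, hsep, _⟩ := hdot
  have ha2 : 2 < a := by
    have h1 : (100 : ℝ) ≤ max (100 * b) (10 * (d : ℝ) ^ 2) :=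
      le_trans (by linarith) (le_max_left _ _)
    have h2 := Real.add_one_le_exp (max (100 * b) (10 * (d : ℝ) ^ 2))
    linarith
  have hfar : ∀ j l : Fin C.1, j ≠ l → ∀ y ∈ C.2 j, ∀ z ∈ C.2 l, a ≤ dist0 d y z := by
    intro j l hjl y hy z hz
    have h1 : sep d C.2 ≤ setDist d (C.2 j) (others d C.2 j) :=
      ciInf_le (Set.finite_range _).bddBelow j
    have h2 : setDist d (C.2 j) (others d C.2 j) ≤ dist0 d y z := by
      apply csInf_le
      · refine ⟨0, ?_⟩
        rintro r ⟨u, _, v, _, rfl⟩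
        exact Real.sqrt_nonneg _
      · refine ⟨y, hy, z, ?_, rfl⟩
        unfold others
        rw [Finset.mem_biUnion]
        exact ⟨l, Finset.mem_univ _, by rw [if_neg (Ne.symm hjl)]; exact hz⟩
    linarith
  apply esc_pos_of_local d hd
  · intro z
    by_contra! hall
    have hex : ∀ k : Fin d, ∃ j, z + stp d (k, true) ∈ C.2 j := by
      intro k
      have := hall k
      unfold confOf at this
      rw [Finset.mem_biUnion] at this
      obtain ⟨j, _, hj⟩ := this
      exact ⟨j, hj⟩
    choose g hg using hex
    have hclose : ∀ k l : Fin d, dist0 d (z + stp d (k, true)) (z + stp d (l, true)) ≤ 2 := by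
      intro k l
      unfold dist0
      rw [Real.sqrt_le_left (by norm_num)]
      have : ∀ j : Fin d, (((z + stp d (k, true)) j : ℝ) - ((z + stp d (l, true)) j : ℝ)) ^ 2 ≤
          (if j = k then 1 else 0) + (if j = l then 1 else 0) := by
        intro j
        by_cases hk : j = k <;> by_cases hl : j = l <;> simp [stp, Pi.single_apply, hk, hl]
        all_goals split_ifs <;> norm_num
      refine (Finset.sum_le_sum fun j _ => this j).trans ?_
      rw [Finset.sum_add_distrib]
      simp
      norm_num
    let k0 : Fin d := ⟨0, by omega⟩
    have hsame : ∀ k, g k = g k0 := by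
      intro k
      by_contra hne
      have := hfar _ _ hne _ (hg k) _ (hg k0)
      have := hclose k k0
      linarith
    have hle : (Finset.univ.image fun k : Fin d => z + stp d (k, true)).card ≤
        (C.2 (g k0)).card := by
      apply Finset.card_le_card
      intro w hw
      rw [Finset.mem_image] at hw
      obtain ⟨k, _, rfl⟩ := hw
      rw [← hsame k]
      exact hg k
    rw [Finset.card_image_of_injective, Finset.card_univ, Fintype.card_fin] at hle
    · have := hcard (g k0)
      omega
    · intro k l hkl
      have := stp_inj d (add_left_cancel hkl)
      exact congrArg Prod.fst this
  · unfold confOf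
    rw [Finset.mem_biUnion]
    exact ⟨i, Finset.mem_univ _, hx⟩

end HATFormal
end

section
/- For all integers 3 ≤ d ≤ d', G_{d'}(o) ≤ G_d(o); that is, the Green's function of simple random walk at the origin is a nonincreasing function of the dimension d ≥ 3. -/
open MeasureTheory

namespace HATFormal

open Real in
/-- Uniform probability measure on `(-π, π]`. -/
noncomputable def um : Measure ℝ :=
  ENNReal.ofReal (1 / (2 * π)) • volume.restrict (Set.Ioc (-π) π)

lemma um_integral {E : Type*} [NormedAddCommGroup E] [NormedSpace ℝ E] (f : ℝ → E) :
    ∫ x, f x ∂um = (1 / (2 * Real.pi)) • ∫ x in (-Real.pi)..Real.pi, f x := by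
  have := Real.pi_pos
  rw [um, integral_smul_measure, intervalIntegral.integral_of_le (by linarith),
    ENNReal.toReal_ofReal (by positivity)]

instance um_prob : IsProbabilityMeasure um := by
  have := Real.pi_pos
  constructor
  simp only [um, Measure.smul_apply, Measure.restrict_apply MeasurableSet.univ, Set.univ_inter,
    Real.volume_Ioc, smul_eq_mul]
  rw [← ENNReal.ofReal_mul (by positivity)]
  rw [show 1 / (2 * Real.pi) * (Real.pi - -Real.pi) = 1 by field_simp; ring]
  simp

lemma um_fourier (n : ℤ) :
    ∫ x, Complex.exp (Complex.I * (n * x : ℝ)) ∂um = if n = 0 then 1 else 0 := by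
  have hpi := Real.pi_pos
  split_ifs with h
  · subst h; simp
  · rw [um_integral]
    have h1 : ∀ x : ℝ, Complex.exp (Complex.I * (n * x : ℝ)) =
        Complex.exp ((Complex.I * n) * x) := by
      intro x; congr 1; push_cast; ring
    simp_rw [h1]
    have hne : Complex.I * (n : ℂ) ≠ 0 := by simp [h]
    rw [integral_exp_mul_complex hne]
    have : Complex.exp (Complex.I * n * (Real.pi : ℝ)) =
        Complex.exp (Complex.I * n * ((-Real.pi : ℝ))) := by
      rw [Complex.exp_eq_exp_iff_exists_int]
      exact ⟨n, by push_cast; ring⟩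
    rw [this]; simp

/-- Product measure. -/
noncomputable def pm (d : ℕ) : Measure (Fin d → ℝ) := Measure.pi fun _ => um

instance pm_prob (d : ℕ) : IsProbabilityMeasure (pm d) := by
  unfold pm; infer_instance

lemma pm_fourier (d : ℕ) (v : Pt d) :
    ∫ θ, Complex.exp (Complex.I * (∑ i, v i * θ i : ℝ)) ∂(pm d) = if v = 0 then 1 else 0 := by
  have h1 : ∀ θ : Fin d → ℝ, Complex.exp (Complex.I * (∑ i, v i * θ i : ℝ)) =
      ∏ i, Complex.exp (Complex.I * (v i * θ i : ℝ)) := by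
    intro θ
    rw [← Complex.exp_sum]; congr 1; push_cast; rw [Finset.mul_sum]
  simp_rw [h1]
  rw [pm, integral_fintype_prod_eq_prod (𝕜 := ℂ)
    (f := fun i (x : ℝ) => Complex.exp (Complex.I * (v i * x : ℝ)))]
  simp_rw [um_fourier]
  rw [Finset.prod_ite_zero]
  simp [funext_iff]

/-- The steps as a finset. -/
noncomputable def DirF (d : ℕ) : Finset (Pt d) :=
  Finset.univ.image fun p : Fin d × Bool => Pi.single p.1 (if p.2 then 1 else -1)

lemma mem_DirF (d : ℕ) (s : Pt d) : s ∈ DirF d ↔ s ∈ Dir d := by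
  simp only [DirF, Dir, Finset.mem_image, Finset.mem_univ, true_and, Set.mem_ofPred_eq,
    Prod.exists, Bool.exists_bool]
  constructor
  · rintro ⟨i, h | h⟩
    · exact ⟨i, Or.inr (by simpa using h.symm)⟩
    · exact ⟨i, Or.inl (by simpa using h.symm)⟩
  · rintro ⟨i, h | h⟩
    · exact ⟨i, Or.inr (by simpa using h.symm)⟩
    · exact ⟨i, Or.inl (by simpa using h.symm)⟩

lemma sum_DirF (d : ℕ) (f : Pt d → ℂ) :
    ∑ e ∈ DirF d, f e = ∑ i, (f (Pi.single i 1) + f (Pi.single i (-1))) := by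
  rw [DirF, Finset.sum_image]
  · rw [Fintype.sum_prod_type]
    simp
  · rintro ⟨i, b⟩ - ⟨j, c⟩ - h
    have h1 := congrFun h i
    have h2 := congrFun h j
    simp only [Pi.single_eq_same] at h1 h2
    by_cases hij : i = j
    · subst hij
      cases b <;> cases c <;> simp at h1 ⊢
    · rw [Pi.single_eq_of_ne hij] at h1
      cases b <;> simp at h1

/-- Average of cosines. -/
noncomputable def avc (d : ℕ) (θ : Fin d → ℝ) : ℝ := (∑ i, Real.cos (θ i)) / d

lemma card_eq (d t : ℕ) :
    Nat.card {s : Fin t → Pt d // (∀ i, s i ∈ Dir d) ∧ wpos d 0 s t = 0} =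
    ((Fintype.piFinset fun _ : Fin t => DirF d).filter (fun s => ∑ i, s i = 0)).card := by
  apply Nat.subtype_card
  intro s
  simp [mem_DirF, wpos]

lemma dir_exp (d : ℕ) (θ : Fin d → ℝ) :
    ∑ e ∈ DirF d, Complex.exp (Complex.I * (∑ i, e i * θ i : ℝ)) =
      ((2 * ∑ i, Real.cos (θ i) : ℝ) : ℂ) := by
  rw [sum_DirF, Finset.mul_sum]
  push_cast
  refine Finset.sum_congr rfl fun i _ => ?_
  have h : ∀ c : ℤ, ∑ j, (((Pi.single i c : Pt d) j : ℤ) : ℂ) * (θ j : ℂ) = c * θ i := by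
    intro c
    rw [Finset.sum_eq_single i]
    · simp
    · intro j _ hj; simp [Pi.single_eq_of_ne hj]
    · simp
  rw [h, h, Complex.cos]
  push_cast
  rw [show Complex.I * (1 * (θ i : ℂ)) = θ i * Complex.I by ring,
    show Complex.I * (-1 * (θ i : ℂ)) = -θ i * Complex.I by ring]
  ring

lemma pm_integrable {E : Type*} [NormedAddCommGroup E] {d : ℕ} {f : (Fin d → ℝ) → E}
    (hf : Continuous f) [SecondCountableTopologyEither (Fin d → ℝ) E] (C : ℝ)
    (hC : ∀ θ, ‖f θ‖ ≤ C) : Integrable f (pm d) :=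
  Integrable.of_bound hf.aestronglyMeasurable C (Filter.Eventually.of_forall hC)

lemma prob_eq (d t : ℕ) (hd : 0 < d) :
    prob d t (fun s => wpos d 0 s t = 0) = ∫ θ, (avc d θ) ^ t ∂(pm d) := by
  have key : ((Nat.card {s : Fin t → Pt d // (∀ i, s i ∈ Dir d) ∧ wpos d 0 s t = 0} : ℕ) : ℂ) =
      ∫ θ, (((2 * ∑ i, Real.cos (θ i)) ^ t : ℝ) : ℂ) ∂(pm d) := by
    rw [card_eq, Finset.card_filter]
    push_cast
    simp_rw [← pm_fourier]
    rw [← integral_finsetSum]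
    · refine integral_congr_ae (Filter.Eventually.of_forall fun θ => ?_)
      have h2 := dir_exp d θ
      push_cast at h2
      simp only
      rw [← h2, ← Fin.prod_const, Finset.prod_univ_sum]
      refine Finset.sum_congr rfl fun s _ => ?_
      rw [← Complex.exp_sum, ← Finset.mul_sum, Finset.sum_comm]
      congr 2
      push_cast
      refine Finset.sum_congr rfl fun i _ => ?_
      rw [← Finset.sum_mul]
      simp
    · intro s _
      refine pm_integrable (by fun_prop) 1 fun θ => ?_
      rw [mul_comm, Complex.norm_exp_ofReal_mul_I]
  rw [integral_complex_ofReal] at key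
  have key' : ((Nat.card {s : Fin t → Pt d // (∀ i, s i ∈ Dir d) ∧ wpos d 0 s t = 0} : ℕ) : ℝ) =
      ∫ θ, ((2 * ∑ i, Real.cos (θ i)) ^ t : ℝ) ∂(pm d) := by exact_mod_cast key
  rw [prob, key', ← integral_div]
  congr 1; ext θ
  have : (d : ℝ) ≠ 0 := by positivity
  rw [avc, ← div_pow]
  push_cast
  congr 1
  field_simp

lemma prob_nonneg' (d t : ℕ) (P) : 0 ≤ prob d t P := by unfold prob; positivity

lemma prob_odd (d t : ℕ) (ht : Odd t) : prob d t (fun s => wpos d 0 s t = 0) = 0 := by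
  have : IsEmpty {s : Fin t → Pt d // (∀ i, s i ∈ Dir d) ∧ wpos d 0 s t = 0} := by
    constructor
    rintro ⟨s, hs, h⟩
    have h1 : ∀ i, ((∑ j, s i j : ℤ) : ZMod 2) = 1 := by
      intro i
      obtain ⟨j, hj | hj⟩ := hs i <;> rw [hj] <;> simp
    have h2 : ∑ i, s i = 0 := by simpa [wpos] using h
    have h3 : ((∑ j, (∑ i, s i) j : ℤ) : ZMod 2) = 0 := by rw [h2]; simp
    simp only [Finset.sum_apply] at h3
    rw [Finset.sum_comm, Int.cast_sum] at h3
    simp only [h1] at h3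
    simp at h3
    rw [ZMod.natCast_eq_zero_iff] at h3
    have := (Nat.odd_iff.mp ht)
    omega
  simp [prob, Nat.card_of_isEmpty]

lemma avc_abs (d : ℕ) (θ : Fin d → ℝ) : |avc d θ| ≤ 1 := by
  rw [avc, abs_div, Nat.abs_cast]
  apply div_le_one_of_le₀ _ (by positivity)
  calc |∑ i, Real.cos (θ i)| ≤ ∑ i, |Real.cos (θ i)| := Finset.abs_sum_le_sum_abs _ _
    _ ≤ ∑ i : Fin d, (1 : ℝ) := Finset.sum_le_sum fun i _ => Real.abs_cos_le_one _
    _ = d := by simp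

lemma avc_cont (d : ℕ) : Continuous (avc d) := by unfold avc; fun_prop

lemma avc_int (d t : ℕ) : Integrable (fun θ => avc d θ ^ t) (pm d) :=
  pm_integrable ((avc_cont d).pow t) 1 fun θ => by
    rw [norm_pow, Real.norm_eq_abs]; exact pow_le_one₀ (abs_nonneg _) (avc_abs d θ)

lemma mp_drop (d : ℕ) (j : Fin (d + 1)) :
    MeasurePreserving (fun θ : Fin (d + 1) → ℝ => fun i => θ (j.succAbove i))
      (pm (d + 1)) (pm d) := by
  have h := measurePreserving_piFinSuccAbove (fun _ : Fin (d + 1) => um) j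
  exact measurePreserving_snd.comp h

lemma avc_jensen (d t : ℕ) (hd : 0 < d) (ht : Even t) (θ : Fin (d + 1) → ℝ) :
    avc (d + 1) θ ^ t ≤ ∑ j : Fin (d + 1), (1 / (d + 1 : ℝ)) *
      (avc d fun i => θ (j.succAbove i)) ^ t := by
  have h := (ht.convexOn_pow (𝕜 := ℝ)).map_sum_le (t := Finset.univ)
    (w := fun _ : Fin (d + 1) => 1 / (d + 1 : ℝ))
    (p := fun j => avc d fun i => θ (j.succAbove i))
    (fun _ _ => by positivity) (by simp; field_simp) (fun _ _ => Set.mem_univ _)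
  simp only [smul_eq_mul] at h
  refine le_of_eq_of_le ?_ h
  suffices h0 : avc (d + 1) θ = ∑ j : Fin (d + 1), (1 / (d + 1 : ℝ)) *
      (avc d fun i => θ (j.succAbove i)) by rw [h0]
  have h1 : ∀ j : Fin (d + 1), avc d (fun i => θ (j.succAbove i)) =
      ((∑ i, Real.cos (θ i)) - Real.cos (θ j)) / d := by
    intro j
    rw [avc, Fin.sum_univ_succAbove _ j]; ring
  simp only [h1]
  rw [← Finset.mul_sum, ← Finset.sum_div, Finset.sum_sub_distrib]
  have : (d : ℝ) ≠ 0 := by positivity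
  simp [avc]
  field_simp
  ring

lemma prob_succ_le (d t : ℕ) (hd : 0 < d) :
    prob (d + 1) t (fun s => wpos (d + 1) 0 s t = 0) ≤ prob d t (fun s => wpos d 0 s t = 0) := by
  rcases Nat.even_or_odd t with ht | ht
  swap
  · rw [prob_odd _ _ ht, prob_odd _ _ ht]
  rw [prob_eq _ _ hd, prob_eq _ _ (Nat.succ_pos d)]
  have hi : ∀ j : Fin (d + 1), Integrable (fun θ : Fin (d + 1) → ℝ => (1 / (d + 1 : ℝ)) *
      (avc d fun i => θ (j.succAbove i)) ^ t) (pm (d + 1)) := fun j =>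
    (((mp_drop d j).integrable_comp (avc_int d t).aestronglyMeasurable).2 (avc_int d t)).const_mul _
  have he : ∀ j : Fin (d + 1), ∫ θ : Fin (d + 1) → ℝ, (1 / (d + 1 : ℝ)) *
      (avc d fun i => θ (j.succAbove i)) ^ t ∂(pm (d + 1)) =
      (1 / (d + 1 : ℝ)) * ∫ θ, avc d θ ^ t ∂(pm d) := by
    intro j
    rw [integral_const_mul, ← (mp_drop d j).map_eq, integral_map]
    · exact (mp_drop d j).measurable.aemeasurable
    · exact (((avc_cont d).pow t)).aestronglyMeasurable
  calc _ ≤ ∫ θ, ∑ j : Fin (d + 1), (1 / (d + 1 : ℝ)) *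
      (avc d fun i => θ (j.succAbove i)) ^ t ∂(pm (d + 1)) :=
        integral_mono (avc_int _ t) (integrable_finsetSum _ fun j _ => hi j)
          (fun θ => avc_jensen d t hd ht θ)
    _ = _ := by
      rw [integral_finsetSum _ fun j _ => hi j]
      simp_rw [he]
      simp
      field_simp

lemma prob_le (d d' t : ℕ) (hd : 0 < d) (h : d ≤ d') :
    prob d' t (fun s => wpos d' 0 s t = 0) ≤ prob d t (fun s => wpos d 0 s t = 0) := by
  induction d', h using Nat.le_induction with
  | base => exact le_rfl
  | succ n hn ih => exact (prob_succ_le n t (by omega)).trans ih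

lemma um_gauss (s : ℝ) (hs : 0 < s) :
    ∫ x, Real.exp (s * (Real.cos x - 1)) ∂um ≤ Real.sqrt (Real.pi ^ 3 / 2) / Real.sqrt s := by
  have hpi := Real.pi_pos
  have hpi3 := Real.pi_gt_three
  rw [um_integral, intervalIntegral.integral_of_le (by linarith), smul_eq_mul]
  have hb : 0 < 2 * s / Real.pi ^ 2 := by positivity
  have h1 : ∫ x in Set.Ioc (-Real.pi) Real.pi, Real.exp (s * (Real.cos x - 1)) ≤
      ∫ x in Set.Ioc (-Real.pi) Real.pi, Real.exp (-(2 * s / Real.pi ^ 2) * x ^ 2) := by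
    refine setIntegral_mono_on ?_ (integrable_exp_neg_mul_sq hb).integrableOn
      measurableSet_Ioc ?_
    · exact (Continuous.integrableOn_Icc (by fun_prop)).mono_set Set.Ioc_subset_Icc_self
    · intro x hx
      apply Real.exp_le_exp.2
      have := Real.cos_le_one_sub_mul_cos_sq (x := x) (abs_le.2 ⟨hx.1.le, hx.2⟩)
      have h2 : -(2 * s / Real.pi ^ 2) * x ^ 2 = s * (-(2 / Real.pi ^ 2 * x ^ 2)) := by ring
      rw [h2]
      exact mul_le_mul_of_nonneg_left (by linarith) hs.le
  have h2 : ∫ x in Set.Ioc (-Real.pi) Real.pi, Real.exp (-(2 * s / Real.pi ^ 2) * x ^ 2) ≤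
      ∫ x, Real.exp (-(2 * s / Real.pi ^ 2) * x ^ 2) :=
    setIntegral_le_integral (integrable_exp_neg_mul_sq hb)
      (Filter.Eventually.of_forall fun x => (Real.exp_pos _).le)
  rw [integral_gaussian] at h2
  have h3 : Real.sqrt (Real.pi / (2 * s / Real.pi ^ 2)) =
      Real.sqrt (Real.pi ^ 3 / 2) / Real.sqrt s := by
    rw [← Real.sqrt_div (by positivity)]; congr 1; field_simp
  rw [h3] at h2
  have h4 := h1.trans h2
  refine le_trans ?_ h4
  have h5 : 0 ≤ ∫ x in Set.Ioc (-Real.pi) Real.pi, Real.exp (s * (Real.cos x - 1)) :=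
    integral_nonneg fun x => (Real.exp_pos _).le
  refine mul_le_of_le_one_left h5 ?_
  rw [div_le_one (by positivity)]; linarith

lemma um_flip (s : ℝ) :
    ∫ x, Real.exp (s * (-Real.cos x - 1)) ∂um = ∫ x, Real.exp (s * (Real.cos x - 1)) ∂um := by
  rw [um_integral, um_integral]
  congr 1
  have hp : Function.Periodic (fun x => Real.exp (s * (Real.cos x - 1))) (2 * Real.pi) := by
    intro x; simp
  have h := hp.intervalIntegral_add_eq (-Real.pi) 0
  rw [show -Real.pi + 2 * Real.pi = Real.pi by ring] at h
  rw [h]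
  have : ∀ x, Real.exp (s * (-Real.cos x - 1)) =
      (fun x => Real.exp (s * (Real.cos x - 1))) (x + Real.pi) := by
    intro x; simp
  simp_rw [this]
  rw [intervalIntegral.integral_comp_add_right (fun x => Real.exp (s * (Real.cos x - 1)))]
  congr 1 <;> ring

lemma pm_exp (t : ℕ) (σ : ℝ) :
    ∫ θ, Real.exp (t * (σ * avc 3 θ - 1)) ∂(pm 3) =
      (∫ x, Real.exp ((t / 3 : ℝ) * (σ * Real.cos x - 1)) ∂um) ^ 3 := by
  have h : ∀ θ : Fin 3 → ℝ, Real.exp (t * (σ * avc 3 θ - 1)) =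
      ∏ i, Real.exp ((t / 3 : ℝ) * (σ * Real.cos (θ i) - 1)) := by
    intro θ
    rw [← Real.exp_sum, avc]; congr 1
    simp [Fin.sum_univ_three]; ring
  simp_rw [h]
  rw [pm, integral_fintype_prod_eq_prod (𝕜 := ℝ)
    (f := fun _ (x : ℝ) => Real.exp ((t / 3 : ℝ) * (σ * Real.cos x - 1)))]
  simp

lemma prob3_bound (t : ℕ) (ht : 0 < t) :
    prob 3 t (fun s => wpos 3 0 s t = 0) ≤
      2 * (Real.sqrt (Real.pi ^ 3 / 2) / Real.sqrt (t / 3)) ^ 3 := by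
  have htt : (0 : ℝ) < t / 3 := by positivity
  rw [prob_eq _ _ (by norm_num)]
  have hi : ∀ σ : ℝ, |σ| ≤ 1 → Integrable (fun θ => Real.exp (t * (σ * avc 3 θ - 1))) (pm 3) := by
    intro σ hσ
    have := avc_cont 3
    refine pm_integrable (by fun_prop) 1 fun θ => ?_
    rw [Real.norm_eq_abs, abs_of_pos (Real.exp_pos _), Real.exp_le_one_iff]
    apply mul_nonpos_of_nonneg_of_nonpos (by positivity)
    have h1 : |σ * avc 3 θ| ≤ 1 := by
      rw [abs_mul]; exact mul_le_one₀ hσ (abs_nonneg _) (avc_abs 3 θ)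
    linarith [le_abs_self (σ * avc 3 θ)]
  have h1 : ∫ θ, avc 3 θ ^ t ∂(pm 3) ≤ ∫ θ, (Real.exp (t * (1 * avc 3 θ - 1)) +
      Real.exp (t * ((-1) * avc 3 θ - 1))) ∂(pm 3) := by
    refine integral_mono (avc_int 3 t) ((hi 1 (by simp)).add (hi (-1) (by simp))) fun θ => ?_
    simp only
    have h2 : avc 3 θ ^ t ≤ Real.exp (t * (|avc 3 θ| - 1)) := by
      rw [Real.exp_nat_mul]
      calc avc 3 θ ^ t ≤ |avc 3 θ ^ t| := le_abs_self _
        _ = |avc 3 θ| ^ t := abs_pow _ _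
        _ ≤ _ := pow_le_pow_left₀ (abs_nonneg _)
          (by linarith [Real.add_one_le_exp (|avc 3 θ| - 1)]) _
    refine h2.trans ?_
    have e1 := Real.exp_pos (t * (1 * avc 3 θ - 1))
    have e2 := Real.exp_pos (t * ((-1) * avc 3 θ - 1))
    rcases abs_cases (avc 3 θ) with ⟨h, -⟩ | ⟨h, -⟩
    · rw [h]; rw [one_mul] at e1 ⊢; linarith
    · rw [h, neg_one_mul]; rw [neg_one_mul] at e2; linarith
  refine h1.trans ?_
  rw [integral_add (hi 1 (by simp)) (hi (-1) (by simp)), pm_exp, pm_exp]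
  simp only [one_mul, neg_one_mul]
  rw [um_flip, ← two_mul]
  have h0 : 0 ≤ ∫ x, Real.exp ((t / 3 : ℝ) * (Real.cos x - 1)) ∂um :=
    integral_nonneg fun x => (Real.exp_pos _).le
  have h6 := um_gauss _ htt
  gcongr

lemma prob3_summable : Summable fun t : ℕ => prob 3 t (fun s => wpos 3 0 s t = 0) := by
  rw [← summable_nat_add_iff 1]
  have hs : Summable fun t : ℕ => 1 / ((t + 1 : ℕ) : ℝ) ^ (3 / 2 : ℝ) :=
    (summable_nat_add_iff 1).2 (Real.summable_one_div_nat_rpow.2 (by norm_num))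
  refine Summable.of_nonneg_of_le (fun t => prob_nonneg' _ _ _)
    (fun t => prob3_bound (t + 1) (Nat.succ_pos t)) ?_
  refine (hs.mul_left (2 * (Real.sqrt (Real.pi ^ 3 / 2) * Real.sqrt 3) ^ 3)).congr fun t => ?_
  have hp : (0 : ℝ) < ((t + 1 : ℕ) : ℝ) := by positivity
  have h : ((t + 1 : ℕ) : ℝ) ^ (3 / 2 : ℝ) = Real.sqrt ((t + 1 : ℕ) : ℝ) ^ 3 := by
    rw [Real.sqrt_eq_rpow, ← Real.rpow_natCast, ← Real.rpow_mul hp.le]; norm_num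
  rw [h, Real.sqrt_div hp.le]
  have := Real.sqrt_pos.2 hp
  field_simp

/-- The Green's function of simple random walk at the origin is a nonincreasing function
of the dimension `d ≥ 3`. -/
theorem green_mono (d d' : ℕ) (hd : 3 ≤ d) (hdd : d ≤ d') :
    green d' 0 ≤ green d 0 := by
  have h3 : ∀ n, 3 ≤ n → Summable fun t : ℕ => prob n t (fun s => wpos n 0 s t = 0) := fun n hn =>
    Summable.of_nonneg_of_le (fun t => prob_nonneg' _ _ _)
      (fun t => prob_le 3 n t (by norm_num) hn) prob3_summable
  exact Summable.tsum_le_tsum (fun t => prob_le d d' t (by omega) hdd)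
    (h3 d' (hd.trans hdd)) (h3 d hd)

end HATFormal
end

section
/- For every integer d ≥ 5, the Green's function of simple random walk on Z^d at the origin satisfies G_d(o) ≤ 1.2. -/
open MeasureTheory

namespace HATFormal

/-- The dominating sequence. -/
noncomputable def bseq : ℕ → ℝ
  | 0 => 1
  | n + 1 => bseq n * ((2 * n + 1) / (10 * ((n / 5 : ℕ) + 1)))

lemma bseq_nonneg (n : ℕ) : 0 ≤ bseq n := by
  induction n with
  | zero => simp [bseq]
  | succ n ih => rw [bseq]; positivity

lemma bseq_block (k : ℕ) (hk : 1 ≤ k) :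
    bseq (5*k) + bseq (5*k+1) + bseq (5*k+2) + bseq (5*k+3) + bseq (5*k+4)
      + (4 * ((k:ℝ)+1) + 1/2) * bseq (5*k+5) ≤ (4 * (k:ℝ) + 1/2) * bseq (5*k) := by
  have e0 : (5*k)/5 = k := by omega
  have e1 : (5*k+1)/5 = k := by omega
  have e2 : (5*k+2)/5 = k := by omega
  have e3 : (5*k+3)/5 = k := by omega
  have e4 : (5*k+4)/5 = k := by omega
  have h := bseq_nonneg (5*k)
  have h1 : bseq (5*k+1) = bseq (5*k) * ((10*k+1)/(10*(k+1))) := by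
    rw [bseq, e0]; push_cast; ring
  have h2 : bseq (5*k+2) = bseq (5*k+1) * ((10*k+3)/(10*(k+1))) := by
    rw [bseq, e1]; push_cast; ring
  have h3 : bseq (5*k+3) = bseq (5*k+2) * ((10*k+5)/(10*(k+1))) := by
    rw [bseq, e2]; push_cast; ring
  have h4 : bseq (5*k+4) = bseq (5*k+3) * ((10*k+7)/(10*(k+1))) := by
    rw [bseq, e3]; push_cast; ring
  have h5 : bseq (5*k+5) = bseq (5*k+4) * ((10*k+9)/(10*(k+1))) := by
    rw [bseq, e4]; push_cast; ring
  rw [h5, h4, h3, h2, h1]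
  obtain ⟨x, hx⟩ : ∃ x : ℝ, (k:ℝ) = x + 1 := ⟨k - 1, by ring⟩
  have hx0 : 0 ≤ x := by
    have : (1:ℝ) ≤ k := by exact_mod_cast hk
    linarith
  rw [hx]
  have key : 1 + ((10*(x+1)+1)/(10*(x+1+1))) * (1 + ((10*(x+1)+3)/(10*(x+1+1)))
     * (1 + ((10*(x+1)+5)/(10*(x+1+1))) * (1 + ((10*(x+1)+7)/(10*(x+1+1)))
     * (1 + (4 * (x+1+1) + 1/2) * ((10*(x+1)+9)/(10*(x+1+1)))))))
     ≤ 4 * (x+1) + 1/2 := by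
    rw [← sub_nonneg]
    have : (4 * (x+1) + 1/2) - (1 + ((10*(x+1)+1)/(10*(x+1+1))) * (1 + ((10*(x+1)+3)/(10*(x+1+1)))
     * (1 + ((10*(x+1)+5)/(10*(x+1+1))) * (1 + ((10*(x+1)+7)/(10*(x+1+1)))
     * (1 + (4 * (x+1+1) + 1/2) * ((10*(x+1)+9)/(10*(x+1+1))))))))
     = ((4 * (x+1) + 1/2 - 1) * (10*(x+1+1))^5 - (10*(x+1)+1) * ((10*(x+1+1))^4 + (10*(x+1)+3) *
        ((10*(x+1+1))^3 + (10*(x+1)+5) * ((10*(x+1+1))^2 + (10*(x+1)+7) * ((10*(x+1+1)) +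
         (4 * (x+1+1) + 1/2) * (10*(x+1)+9)))))) / (10*(x+1+1))^5 := by
      field_simp
      ring
    rw [this]
    apply div_nonneg _ (by positivity)
    ring_nf
    positivity
  have := mul_le_mul_of_nonneg_left key h
  linarith

lemma bseq_sum (k : ℕ) :
    ∑ n ∈ Finset.range (5 * (k+1)), bseq n + (4 * ((k:ℝ)+1) + 1/2) * bseq (5*(k+1)) ≤ 1.2 := by
  induction k with
  | zero => simp [Finset.sum_range_succ, bseq]; norm_num
  | succ k ih =>
    have h := bseq_block (k+1) (by omega)
    have e : 5 * (k+1+1) = 5*(k+1)+1+1+1+1+1 := by ring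
    rw [e]
    simp only [Finset.sum_range_succ]
    push_cast at h ⊢
    simp only [add_assoc] at *
    norm_num at *
    linarith

lemma bseq_sum_le (N : ℕ) : ∑ n ∈ Finset.range N, bseq n ≤ 1.2 := by
  have h := bseq_sum N
  have h1 : ∑ n ∈ Finset.range N, bseq n ≤ ∑ n ∈ Finset.range (5 * (N+1)), bseq n :=
    Finset.sum_le_sum_of_subset_of_nonneg (Finset.range_mono (by omega))
      (fun i _ _ => bseq_nonneg i)
  have := bseq_nonneg (5*(N+1))
  have h2 : 0 ≤ (4 * ((N:ℝ)+1) + 1/2) * bseq (5*(N+1)) := by positivity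
  linarith

/-- product of ceilings -/
def vseq : ℕ → ℕ
  | 0 => 1
  | n + 1 => vseq n * (n / 5 + 1)

lemma vseq_pos (n : ℕ) : 0 < vseq n := by
  induction n with
  | zero => simp [vseq]
  | succ n ih => rw [vseq]; positivity

lemma vseq_le (n : ℕ) : ∀ l : Fin 5 → ℕ, ∑ i, l i = n → vseq n ≤ ∏ i, (l i).factorial := by
  induction n with
  | zero => intro l _; simp [vseq]; exact Nat.succ_le_of_lt (Finset.prod_pos fun i _ => Nat.factorial_pos _)
  | succ n ih =>
    intro l hl
    obtain ⟨i, hi⟩ : ∃ i, n / 5 + 1 ≤ l i := by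
      by_contra! hc
      simp only [Fin.sum_univ_five] at hl
      have := hc 0; have := hc 1; have := hc 2; have := hc 3; have := hc 4
      omega
    have hs : ∑ j, Function.update l i (l i - 1) j = n := by
      rw [Finset.sum_update_of_mem (Finset.mem_univ i)]
      rw [← Finset.add_sum_erase _ _ (Finset.mem_univ i)] at hl
      rw [← Finset.erase_eq]
      omega
    have h := ih _ hs
    have hp : ∏ j, (l j).factorial = (∏ j, (Function.update l i (l i - 1) j).factorial) * l i := by
      rw [← Finset.mul_prod_erase _ _ (Finset.mem_univ i),
        ← Finset.mul_prod_erase _ (fun j => (Function.update l i (l i - 1) j).factorial) (Finset.mem_univ i)]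
      have : ∏ j ∈ Finset.univ.erase i, (Function.update l i (l i - 1) j).factorial
          = ∏ j ∈ Finset.univ.erase i, (l j).factorial := by
        apply Finset.prod_congr rfl
        intro j hj
        rw [Function.update_of_ne (Finset.ne_of_mem_erase hj)]
      rw [this]
      simp only [Function.update_self]
      rw [← Nat.mul_factorial_pred (by omega : l i ≠ 0)]
      ring
    rw [hp, vseq]
    exact Nat.mul_le_mul h hi

lemma bseq_eq (n : ℕ) : bseq n = (2*n).factorial / (n.factorial * vseq n * 20^n) := by
  induction n with
  | zero => simp [bseq, vseq]
  | succ n ih =>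
    rw [bseq, vseq, ih, show 2*(n+1) = 2*n+1+1 by ring, Nat.factorial_succ, Nat.factorial_succ,
      Nat.factorial_succ]
    have := vseq_pos n
    have := Nat.factorial_pos n
    have h1 : (vseq n : ℝ) ≠ 0 := by positivity
    have h2 : (n.factorial : ℝ) ≠ 0 := by positivity
    push_cast
    field_simp
    ring

section moments
open Finset

/-- `2 cos (2 π k / M)` -/
noncomputable def xc (M : ℕ) [NeZero M] (k : ZMod M) : ℝ := 2 * (ZMod.stdAddChar k : ℂ).re

lemma xc_eq (M : ℕ) [NeZero M] (k : ZMod M) :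
    ((xc M k : ℝ) : ℂ) = ZMod.stdAddChar k + ZMod.stdAddChar (-k) := by
  rw [AddChar.map_neg_eq_conj, Complex.add_conj, xc]

/-- unnormalised moments of the sum of `d` copies -/
noncomputable def Fm (M : ℕ) [NeZero M] (d T : ℕ) : ℝ :=
  ∑ k : Fin d → ZMod M, (∑ i, xc M (k i)) ^ T

lemma Fm_jensen (M : ℕ) [NeZero M] (d T : ℕ) (hd : 1 ≤ d) (hT : Even T) :
    Fm M (d+1) T / (M ^ (d+1) * (d+1 : ℝ) ^ T) ≤ Fm M d T / (M ^ d * (d:ℝ) ^ T) := by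
  have hd0 : (0:ℝ) < d := by exact_mod_cast hd
  have hM : (0:ℝ) < M := by exact_mod_cast NeZero.pos M
  have h1 : ∀ k : Fin (d+1) → ZMod M, (∑ i, xc M (k i)) ^ T / (d+1 : ℝ)^T
      ≤ ∑ j : Fin (d+1), 1 / (d+1 : ℝ) * ((∑ i : Fin d, xc M (k (j.succAbove i))) ^ T / (d:ℝ)^T) := by
    intro k
    have := Real.pow_arith_mean_le_arith_mean_pow_of_even (univ : Finset (Fin (d+1)))
      (fun _ => 1 / (d+1 : ℝ)) (fun j => (∑ i : Fin d, xc M (k (j.succAbove i))) / d)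
      (fun _ _ => by positivity) (by simp; field_simp) hT
    simp only [div_pow] at this ⊢
    refine le_trans (le_of_eq ?_) this
    rw [← div_pow]
    congr 1
    rw [← mul_sum, ← sum_div]
    have h2 : ∀ j : Fin (d+1), ∑ i : Fin d, xc M (k (j.succAbove i))
        = ∑ i, xc M (k i) - xc M (k j) := by
      intro j
      rw [Fin.sum_univ_succAbove _ j]; ring
    simp only [h2, sum_sub_distrib, sum_const, card_univ, Fintype.card_fin, nsmul_eq_mul]
    push_cast
    field_simp
    ring
  have h3 : ∀ j : Fin (d+1), ∑ k : Fin (d+1) → ZMod M, (∑ i : Fin d, xc M (k (j.succAbove i))) ^ T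
      = M * Fm M d T := by
    intro j
    rw [← (Fin.insertNthEquiv (fun _ => ZMod M) j).sum_comp, Fintype.sum_prod_type]
    simp [Fin.insertNthEquiv, Fm, ZMod.card]
  have h4 := sum_le_sum (fun k (_ : k ∈ (univ : Finset (Fin (d+1) → ZMod M))) => h1 k)
  rw [← sum_div, sum_comm] at h4
  simp only [← mul_sum, ← sum_div, h3] at h4
  simp only [sum_const, card_univ, Fintype.card_fin, nsmul_eq_mul] at h4
  push_cast at h4
  rw [← Fm] at h4
  have h5 : Fm M (d+1) T / (M ^ (d+1) * (d+1 : ℝ) ^ T)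
     = (Fm M (d+1) T / (d+1 : ℝ)^T) / M^(d+1) := by field_simp
  rw [h5, div_le_iff₀ (by positivity)]
  refine h4.trans (le_of_eq ?_)
  field_simp
  ring

lemma Fm_five (M : ℕ) [NeZero M] (d T : ℕ) (hd : 5 ≤ d) (hT : Even T) :
    Fm M d T / (M ^ d * (d:ℝ) ^ T) ≤ Fm M 5 T / (M ^ 5 * (5:ℝ) ^ T) := by
  induction d, hd using Nat.le_induction with
  | base => simp
  | succ d hd ih =>
    refine le_trans ?_ ih
    have := Fm_jensen M d T (by omega) hT
    exact_mod_cast this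

/-- moments -/
lemma xc_moment (M : ℕ) [NeZero M] (j : ℕ) (hj : j < M) :
    ∑ k : ZMod M, xc M k ^ j = M * (if Even j then (j.choose (j/2) : ℝ) else 0) := by
  have h : ((∑ k : ZMod M, xc M k ^ j : ℝ) : ℂ)
      = M * (if Even j then (j.choose (j/2) : ℂ) else 0) := by
    push_cast
    simp only [xc_eq, add_pow]
    rw [sum_comm]
    have h1 : ∀ m ∈ range (j+1), ∑ k : ZMod M, (ZMod.stdAddChar k : ℂ) ^ m
        * ZMod.stdAddChar (-k) ^ (j - m) * (j.choose m)
        = if 2 * m = j then M * (j.choose (j/2) : ℂ) else 0 := by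
      intro m hm
      have hm2 : m ≤ j := by simpa [Nat.lt_succ_iff] using hm
      have h2 : ∀ k : ZMod M, (ZMod.stdAddChar k : ℂ) ^ m
        * ZMod.stdAddChar (-k) ^ (j - m) = ZMod.stdAddChar (k * ((2 * m - j : ℤ) : ZMod M)) := by
        intro k
        rw [← AddChar.map_nsmul_eq_pow, ← AddChar.map_nsmul_eq_pow, ← AddChar.map_add_eq_mul]
        congr 1
        simp only [nsmul_eq_mul]
        rw [Nat.cast_sub hm2]
        push_cast
        ring
      rw [← sum_mul]
      simp only [h2]
      rw [AddChar.sum_mulShift _ (ZMod.isPrimitive_stdAddChar M)]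
      have h3 : (((2 * m - j : ℤ) : ZMod M) = 0) ↔ 2 * m = j := by
        rw [ZMod.intCast_zmod_eq_zero_iff_dvd]
        constructor
        · intro hdv
          have := Int.eq_zero_of_abs_lt_dvd hdv (by rw [abs_lt]; constructor <;> omega)
          omega
        · intro h; rw [← h]; simp
      simp only [h3, ZMod.card]
      split_ifs with h4
      · have : m = j / 2 := by omega
        rw [this]
      · simp
    rw [sum_congr rfl h1]
    split_ifs with he
    · obtain ⟨r, rfl⟩ := he
      rw [sum_eq_single r]
      · rw [if_pos (by ring)]
      · intro b _ hb; rw [if_neg (by omega)]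
      · intro h; simp at h
    · rw [mul_zero]
      apply sum_eq_zero
      intro m _
      rw [if_neg]
      intro h; exact he ⟨m, by omega⟩
  apply Complex.ofReal_injective
  rw [h]
  push_cast
  split_ifs <;> simp

lemma Fm_expand (M : ℕ) [NeZero M] (d T : ℕ) (hT : T < M) :
    Fm M d T = M^d * ∑ m ∈ piAntidiag (univ : Finset (Fin d)) T, (Nat.multinomial univ m : ℝ) *
      ∏ i, (if Even (m i) then ((m i).choose (m i/2) : ℝ) else 0) := by
  rw [Fm]
  simp only [sum_pow_eq_sum_piAntidiag]
  rw [sum_comm, mul_sum]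
  apply sum_congr rfl
  intro m hm
  rw [← mul_sum]
  have h1 : ∀ i, m i < M := by
    intro i
    simp only [mem_piAntidiag] at hm
    have := single_le_sum (f := m) (fun _ _ => Nat.zero_le _) (mem_univ i)
    exact lt_of_le_of_lt (this.trans hm.1.le) hT
  have h2 : ∑ k : Fin d → ZMod M, ∏ i, xc M (k i) ^ m i = ∏ i, ∑ k : ZMod M, xc M k ^ m i := by
    rw [prod_univ_sum, Fintype.piFinset_univ]
  rw [h2, prod_congr rfl (fun i _ => xc_moment M (m i) (h1 i)), prod_mul_distrib]
  simp
  ring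

lemma Fm_odd (M : ℕ) [NeZero M] (d T : ℕ) (hT : T < M) (ho : ¬ Even T) : Fm M d T = 0 := by
  rw [Fm_expand M d T hT, sum_eq_zero, mul_zero]
  intro m hm
  simp only [mem_piAntidiag] at hm
  obtain ⟨i, hi⟩ : ∃ i, ¬ Even (m i) := by
    by_contra! hc
    apply ho
    rw [← hm.1]
    exact Finset.even_sum _ (fun i _ => hc i)
  rw [prod_eq_zero (mem_univ i) (by rw [if_neg hi]), mul_zero]

lemma Fm_even (M : ℕ) [NeZero M] (n : ℕ) (hT : 2 * n < M) :
    Fm M 5 (2*n) / (M ^ 5 * (5:ℝ) ^ (2*n)) ≤ bseq n * 4 ^ n := by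
  have hM : (0:ℝ) < M := by exact_mod_cast NeZero.pos M
  rw [Fm_expand M 5 (2*n) hT, mul_div_mul_left _ _ (by positivity)]
  have hv : (0:ℝ) < vseq n := by exact_mod_cast vseq_pos n
  have h1 : ∑ m ∈ piAntidiag (univ : Finset (Fin 5)) (2*n), (Nat.multinomial univ m : ℝ) *
      ∏ i, (if Even (m i) then ((m i).choose (m i/2) : ℝ) else 0)
      = ∑ l ∈ piAntidiag (univ : Finset (Fin 5)) n, (Nat.multinomial univ (fun i => 2 * l i) : ℝ) *
      ∏ i, (((2 * l i).choose (l i) : ℕ): ℝ) := by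
    symm
    apply sum_of_injOn (fun l i => 2 * l i)
    · intro a _ b _ hab
      funext i
      have := congrFun hab i
      simp at this
      exact this
    · intro l hl
      simp only [mem_coe, mem_piAntidiag] at hl ⊢
      refine ⟨?_, by simp⟩
      rw [← mul_sum, hl.1]
    · intro m hm hm2
      obtain ⟨i, hi⟩ : ∃ i, ¬ Even (m i) := by
        by_contra! hc
        apply hm2
        refine ⟨fun i => m i / 2, ?_, ?_⟩
        · simp only [mem_coe, mem_piAntidiag] at hm ⊢
          refine ⟨?_, by simp⟩
          have : ∑ i, m i = 2 * ∑ i, m i / 2 := by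
            rw [mul_sum]
            exact sum_congr rfl (fun i _ => by obtain ⟨r, hr⟩ := hc i; omega)
          have h0 : ∑ i, m i = 2 * n := hm.1
          omega
        · funext i
          obtain ⟨r, hr⟩ := hc i
          simp only
          omega
      rw [prod_eq_zero (mem_univ i) (by rw [if_neg hi]), mul_zero]
    · intro l _
      simp
  have h2 : ∀ l ∈ piAntidiag (univ : Finset (Fin 5)) n,
      (Nat.multinomial univ (fun i => 2 * l i) : ℝ) * ∏ i, (((2 * l i).choose (l i) : ℕ): ℝ)
      ≤ (2*n).factorial / (n.factorial * vseq n) * Nat.multinomial univ l := by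
    intro l hl
    simp only [mem_piAntidiag] at hl
    have hs : ∑ i, 2 * l i = 2 * n := by rw [← mul_sum, hl.1]
    have a1 := Nat.multinomial_spec univ (fun i => 2 * l i)
    have a2 := Nat.multinomial_spec univ l
    rw [hs] at a1
    rw [hl.1] at a2
    have a3 : ∏ i, (2 * l i).factorial = (∏ i, (2 * l i).choose (l i)) *
        ((∏ i, (l i).factorial) * ∏ i, (l i).factorial) := by
      rw [← prod_mul_distrib, ← prod_mul_distrib]
      apply prod_congr rfl
      intro i _
      have := Nat.choose_mul_factorial_mul_factorial (show l i ≤ 2 * l i by omega)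
      rw [show 2 * l i - l i = l i by omega] at this
      rw [← this, mul_assoc]
    have a4 := vseq_le n l hl.1
    have a5 : 0 < ∏ i, (l i).factorial := prod_pos fun i _ => Nat.factorial_pos _
    rw [a3] at a1
    rw [← Nat.cast_prod]
    set P := ∏ i, (l i).factorial
    set Q := ∏ i, (2 * l i).choose (l i)
    set A := Nat.multinomial univ l
    set B := Nat.multinomial univ (fun i => 2 * l i)
    have hA : 0 < A := Nat.multinomial_pos _ _
    rw [← a1, ← a2]
    rw [div_mul_eq_mul_div, le_div_iff₀ (by positivity)]
    have : B * Q * (P * A * vseq n) ≤ Q * (P * P) * B * A := by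
      have : B * Q * P * A * vseq n ≤ B * Q * P * A * P := Nat.mul_le_mul_left _ a4
      nlinarith
    exact_mod_cast this
  have h3 : ∑ l ∈ piAntidiag (univ : Finset (Fin 5)) n, (Nat.multinomial univ l : ℝ) = 5 ^ n := by
    have := sum_pow_eq_sum_piAntidiag (univ : Finset (Fin 5)) (fun _ => (1:ℝ)) n
    simp at this
    exact this.symm
  rw [h1, div_le_iff₀ (by positivity)]
  refine (sum_le_sum h2).trans (le_of_eq ?_)
  rw [← mul_sum, h3, bseq_eq, show (20:ℝ) = 4 * 5 by norm_num, mul_pow, pow_mul', sq]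
  have h2 : (n.factorial : ℝ) ≠ 0 := by positivity
  field_simp
end moments

section counting
open Finset

/-- The unit steps, indexed. -/
def stepv (d : ℕ) (a : Fin d × Bool) : Pt d := Pi.single a.1 (if a.2 then 1 else -1)

lemma stdAddChar_sum (M : ℕ) [NeZero M] {ι : Type*} (s : Finset ι) (f : ι → ZMod M) :
    (ZMod.stdAddChar (∑ i ∈ s, f i) : ℂ) = ∏ i ∈ s, ZMod.stdAddChar (f i) := by
  classical
  induction s using Finset.induction_on with
  | empty => simp
  | insert a s ha ih => rw [sum_insert ha, prod_insert ha, AddChar.map_add_eq_mul, ih]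

lemma count_le (M : ℕ) [NeZero M] (d T : ℕ) (hd : 0 < d) :
    (Nat.card {s : Fin T → Pt d // (∀ i, s i ∈ Dir d) ∧ wpos d 0 s T = 0} : ℝ) * M ^ d
      ≤ Fm M d T := by
  classical
  have hstep : ∀ v ∈ Dir d, ∃ a, v = stepv d a := by
    rintro v ⟨i, h | h⟩
    · exact ⟨(i, true), by simpa [stepv] using h⟩
    · exact ⟨(i, false), by simpa [stepv] using h⟩
  have : Nonempty (Fin d × Bool) := ⟨(⟨0, hd⟩, true)⟩
  choose! g hg using hstep
  have h1 : Nat.card {s : Fin T → Pt d // (∀ i, s i ∈ Dir d) ∧ wpos d 0 s T = 0}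
      ≤ #{f : Fin T → Fin d × Bool | ∀ i, ((∑ t, stepv d (f t) i : ℤ) : ZMod M) = 0} := by
    rw [← Fintype.card_coe, ← Nat.card_eq_fintype_card]
    refine Nat.card_le_card_of_injective (fun s => ⟨fun t => g (s.1 t), ?_⟩) ?_
    · rw [mem_filter]
      refine ⟨mem_univ _, fun i => ?_⟩
      have hs := congrFun s.2.2 i
      simp only [wpos, Fin.is_lt, filter_true, zero_add, Finset.sum_apply, Pi.zero_apply] at hs
      rw [sum_congr rfl (fun t _ => by rw [← hg _ (s.2.1 t)]), hs]
      simp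
    · intro s s2 h
      apply Subtype.ext
      funext t
      have := congrFun (congrArg Subtype.val h) t
      simp only at this
      rw [hg _ (s.2.1 t), hg _ (s2.2.1 t), this]
  have h2 : ((#{f : Fin T → Fin d × Bool | ∀ i, ((∑ t, stepv d (f t) i : ℤ) : ZMod M) = 0}
      * M ^ d : ℕ) : ℂ) = ((Fm M d T : ℝ) : ℂ) := by
    have h3 : ∀ k : Fin d → ZMod M, ((∑ i, xc M (k i) : ℝ) : ℂ)
        = ∑ a : Fin d × Bool, ZMod.stdAddChar (∑ i, k i * ((stepv d a i : ℤ) : ZMod M)) := by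
      intro k
      rw [Fintype.sum_prod_type]
      push_cast
      apply sum_congr rfl
      intro i _
      rw [xc_eq]
      have h4 : ∀ e : ℤ, ∑ j, k j * (((Pi.single i e : Pt d) j : ℤ) : ZMod M) = k i * e := by
        intro e
        rw [sum_eq_single i]
        · simp
        · intro b _ hb; simp [hb]
        · simp
      simp [stepv, h4]
    have h5 : ∀ f : Fin T → Fin d × Bool, ∑ k : Fin d → ZMod M,
        (∏ t, ZMod.stdAddChar (∑ i, k i * ((stepv d (f t) i : ℤ) : ZMod M)) : ℂ)
        = if ∀ i, ((∑ t, stepv d (f t) i : ℤ) : ZMod M) = 0 then (M : ℂ) ^ d else 0 := by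
      intro f
      have h6 : ∀ k : Fin d → ZMod M,
          (∏ t, ZMod.stdAddChar (∑ i, k i * ((stepv d (f t) i : ℤ) : ZMod M)) : ℂ)
          = ∏ i, ZMod.stdAddChar (k i * ((∑ t, stepv d (f t) i : ℤ) : ZMod M)) := by
        intro k
        rw [← stdAddChar_sum, ← stdAddChar_sum, sum_comm]
        congr 1
        apply sum_congr rfl
        intro i _
        push_cast
        rw [mul_sum]
      simp only [h6]
      rw [← Fintype.piFinset_univ,
        ← prod_univ_sum (fun _ => univ) (fun i (x : ZMod M) =>
          (ZMod.stdAddChar (x * ((∑ t, stepv d (f t) i : ℤ) : ZMod M)) : ℂ))]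
      simp only [AddChar.sum_mulShift _ (ZMod.isPrimitive_stdAddChar M), ZMod.card]
      split_ifs with hc
      · simp [hc]
      · push Not at hc
        obtain ⟨i, hi⟩ := hc
        exact prod_eq_zero (mem_univ i) (by rw [if_neg hi]; simp)
    rw [Fm]
    rw [Complex.ofReal_sum]
    simp only [Complex.ofReal_pow, h3]
    simp only [Fintype.sum_pow]
    rw [sum_comm]
    simp only [h5]
    rw [← sum_filter]
    simp
  have h3 : ((#{f : Fin T → Fin d × Bool | ∀ i, ((∑ t, stepv d (f t) i : ℤ) : ZMod M) = 0}
      * M ^ d : ℕ) : ℝ) = Fm M d T := by exact_mod_cast h2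
  rw [← h3, Nat.cast_mul, Nat.cast_pow]
  gcongr

lemma prob_le_s12 (d T : ℕ) (hd : 5 ≤ d) : prob d T (fun s => wpos d 0 s T = 0)
    ≤ if Even T then bseq (T / 2) else 0 := by
  have hd0 : (0:ℝ) < d := by exact_mod_cast (by omega : 0 < d)
  have hM : (0:ℝ) < ((T+1 : ℕ) : ℝ) := by positivity
  have h1 := count_le (T+1) d T (by omega)
  have h2 : prob d T (fun s => wpos d 0 s T = 0) ≤
      Fm (T+1) d T / (((T+1 : ℕ):ℝ)^d * (d:ℝ)^T) / 2^T := by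
    rw [prob, div_div, div_le_div_iff₀ (by positivity) (by positivity)]
    push_cast at h1 ⊢
    rw [mul_pow]
    have := mul_le_mul_of_nonneg_right h1 (show 0 ≤ (d:ℝ)^T * 2^T by positivity)
    linarith
  refine h2.trans ?_
  split_ifs with he
  · have h3 := Fm_five (T+1) d T hd he
    obtain ⟨n, rfl⟩ := he
    rw [← two_mul] at *
    have h4 := Fm_even (2*n+1) n (by omega)
    rw [div_le_iff₀ (by positivity)]
    rw [show 2 * n / 2 = n by omega, show (2:ℝ) ^ (2 * n) = 4 ^ n by rw [pow_mul]; norm_num]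
    exact h3.trans h4
  · rw [Fm_odd _ _ _ (by omega) he]; simp

lemma sum_le (d N : ℕ) (hd : 5 ≤ d) :
    ∑ t ∈ range N, prob d t (fun s => wpos d 0 s t = 0) ≤ 1.2 := by
  have h1 : ∀ K : ℕ, ∑ t ∈ range (2 * K), (if Even t then bseq (t/2) else 0)
      = ∑ n ∈ range K, bseq n := by
    intro K
    induction K with
    | zero => simp
    | succ K ih =>
      rw [show 2 * (K+1) = 2*K+1+1 by ring, sum_range_succ, sum_range_succ, ih, sum_range_succ]
      have : ¬ Even (2*K+1) := by simp
      simp [this]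
  calc _ ≤ ∑ t ∈ range N, (if Even t then bseq (t/2) else 0) :=
        sum_le_sum fun t _ => prob_le_s12 d t hd
    _ ≤ ∑ t ∈ range (2*N), (if Even t then bseq (t/2) else 0) := by
        apply sum_le_sum_of_subset_of_nonneg (range_mono (by omega))
        intro i _ _
        split_ifs
        · exact bseq_nonneg _
        · exact le_rfl
    _ ≤ 1.2 := by rw [h1]; exact bseq_sum_le N

end counting

/-- For every `d ≥ 5`, the Green's function of simple random walk on `ℤ^d` at the origin
satisfies `G_d(o) ≤ 1.2`. -/
theorem green_bound (d : ℕ) (hd : 5 ≤ d) : green d 0 ≤ 1.2 := by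
  exact Real.tsum_le_of_sum_range_le (fun t => by rw [prob]; positivity) (fun N => sum_le d N hd)

end HATFormal
end
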